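/- Let V be a seven-dimensional real vector space with a basis of V* denoted e¹,…,e⁷, and write e^{ijkl} := e^i∧e^j∧e^k∧e^l. Let Ψ₊ := e^{1234}+e^{1256}+e^{3456}−e^{2467}+e^{2357}+e^{1457}+e^{1367} and Ψ₋ := e^{1234}−e^{1256}−e^{3456}−e^{2467}+e^{2357}+e^{1457}+e^{1367} in Λ⁴V*. Then (ρ(Ψ₊), l(Ψ₊), m(Ψ₊), r(Ψ₊)) = (7,5,3,3) and (ρ(Ψ₋), l(Ψ₋), m(Ψ₋), r(Ψ₋)) = (7,4,2,2). Moreover, if W is a seven-dimensional complex vector space with dual basis E¹,…,E⁷ and Ψ_ℂ := E^{1234}+E^{1256}+E^{3456}−E^{2467}+E^{2357}+E^{1457}+E^{1367} ∈ Λ⁴W*, then (ρ(Ψ_ℂ), l(Ψ_ℂ), m(Ψ_ℂ), r(Ψ_ℂ)) = (7,4,2,2). -/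

import Mathlib

open Module

section Machinery

variable {F : Type*} [Field F] {M : Type*} [AddCommGroup M] [Module F M]

/-- `X` is a decomposable `k`-vector, with factors taken from the ambient subspace `A`. -/
def Dec (A : Submodule F M) (k : ℕ) (X : ExteriorAlgebra F M) : Prop :=
  ∃ v : Fin k → M, (∀ i, v i ∈ A) ∧ X = (List.ofFn fun i => ExteriorAlgebra.ι F (v i)).prod

/-- `X` is a sum of `l` decomposable `k`-vectors with factors from `A`. -/
def LenLE (A : Submodule F M) (k l : ℕ) (X : ExteriorAlgebra F M) : Prop :=
  ∃ Y : Fin l → ExteriorAlgebra F M, (∀ i, Dec A k (Y i)) ∧ X = ∑ i, Y i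

/-- `X` has (irreducible) length `l` as a `k`-vector: it is a sum of `l` decomposable
`k`-vectors, and of no smaller number of them. -/
def HasLen (A : Submodule F M) (k l : ℕ) (X : ExteriorAlgebra F M) : Prop :=
  LenLE A k l X ∧ ∀ j < l, ¬ LenLE A k j X

/-- The (irreducible) length of the `k`-vector `X`. -/
noncomputable def len (A : Submodule F M) (k : ℕ) (X : ExteriorAlgebra F M) : ℕ :=
  sInf {l | LenLE A k l X}

/-- `X` belongs to `Λ^k W`, regarded as a subspace of the exterior algebra. -/
def memPow (W : Submodule F M) (k : ℕ) (X : ExteriorAlgebra F M) : Prop :=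
  X ∈ (W.map (ExteriorAlgebra.ι F)) ^ k

/-- The support `[X]` of the `k`-vector `X`: the intersection of all subspaces `W`
with `X ∈ Λ^k W`. -/
noncomputable def supp (k : ℕ) (X : ExteriorAlgebra F M) : Submodule F M :=
  sInf {W | memPow W k X}

/-- The rank `ρ(X) = dim [X]` of the `k`-vector `X`. -/
noncomputable def rkInv (k : ℕ) (X : ExteriorAlgebra F M) : ℕ :=
  Module.finrank F (supp k X)

/-- `(v, W, X₁, X₂)` is an admissible splitting `X = X₁ ∧ v + X₂` of the `k`-vector `X`:
`v ∈ [X] ∖ {0}`, `W` is a complement of `span v` in `[X]`, `X₁ ∈ Λ^(k-1) W` and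
`X₂ ∈ Λ^k W`. -/
def Split (k : ℕ) (X : ExteriorAlgebra F M) (v : M) (W : Submodule F M)
    (X₁ X₂ : ExteriorAlgebra F M) : Prop :=
  v ∈ supp k X ∧ v ≠ 0 ∧
    W ⊔ Submodule.span F {v} = supp k X ∧ W ⊓ Submodule.span F {v} = ⊥ ∧
    memPow W (k - 1) X₁ ∧ memPow W k X₂ ∧
    X = X₁ * ExteriorAlgebra.ι F v + X₂

/-- The invariant `m(X) = min { l(X₁) }` over all admissible splittings of `X`. -/
noncomputable def mInv (A : Submodule F M) (k : ℕ) (X : ExteriorAlgebra F M) : ℕ :=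
  sInf {l | ∃ v W X₁ X₂, Split k X v W X₁ X₂ ∧ HasLen A (k - 1) l X₁}

/-- The invariant `r(X) = min { l(X₂) }` over all admissible splittings of `X`. -/
noncomputable def rInv (A : Submodule F M) (k : ℕ) (X : ExteriorAlgebra F M) : ℕ :=
  sInf {l | ∃ v W X₁ X₂, Split k X v W X₁ X₂ ∧ HasLen A k l X₂}

end Machinery

/-- The wedge product `b i ∧ b j ∧ b k ∧ b l` of four vectors. -/
noncomputable def wedge4 {F : Type*} [Field F] {M : Type*} [AddCommGroup M] [Module F M]
    (b : Fin 7 → M) (i j k l : Fin 7) : ExteriorAlgebra F M :=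
  ExteriorAlgebra.ι F (b i) * ExteriorAlgebra.ι F (b j) *
    ExteriorAlgebra.ι F (b k) * ExteriorAlgebra.ι F (b l)

/-- The four-form `Ψ₊ = e^{1234}+e^{1256}+e^{3456}-e^{2467}+e^{2357}+e^{1457}+e^{1367}`
(the Hodge dual of a `G₂`-structure), written with `0`-based indices. -/
noncomputable def PsiPlus {F : Type*} [Field F] {M : Type*} [AddCommGroup M] [Module F M]
    (e : Fin 7 → M) : ExteriorAlgebra F M :=
  wedge4 e 0 1 2 3 + wedge4 e 0 1 4 5 + wedge4 e 2 3 4 5 - wedge4 e 1 3 5 6 +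
    wedge4 e 1 2 4 6 + wedge4 e 0 3 4 6 + wedge4 e 0 2 5 6

/-- The four-form `Ψ₋ = e^{1234}-e^{1256}-e^{3456}-e^{2467}+e^{2357}+e^{1457}+e^{1367}`
(the Hodge dual of a `G₂*`-structure), written with `0`-based indices. -/
noncomputable def PsiMinus {F : Type*} [Field F] {M : Type*} [AddCommGroup M] [Module F M]
    (e : Fin 7 → M) : ExteriorAlgebra F M :=
  wedge4 e 0 1 2 3 - wedge4 e 0 1 4 5 - wedge4 e 2 3 4 5 - wedge4 e 1 3 5 6 +
    wedge4 e 1 2 4 6 + wedge4 e 0 3 4 6 + wedge4 e 0 2 5 6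

/-! Over a field in which `2 ≠ 0`, `Ψ₋` is, in a suitable basis, the sum of `u₀ ∧ (α + β)`, with
`α` and `β` decomposable, and a multiple of the square of a symplectic form on the span of
`u₁, …, u₆`; a square root of `-1` turns `Ψ₊` into `Ψ₋`. No endomorphism `v ⊗ f` of rank one
annihilates this form, whereas if its length, `m` or `r` were less than `4`, `2`, `2`, then counting
dimensions of divisors and annihilators of the decomposable summands would produce one.

Over an ordered field, the coordinates of `v ∧ w ∧ Ψ₊` are those of the cross product of `v` and
`w`, and `∑ minor² = 2 ∑ cross²` is Lagrange's identity `‖v ∧ w‖² = ‖v × w‖²`. Hence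
`v ∧ w ∧ Ψ₊ ≠ 0` for independent `v`, `w`. Dually, `g ⌋ (f ⌋ Ψ₊)` violates the Plücker relations for
independent `f`, `g`, as a signed sum of these relations is `∑ cross²`. Since any two decomposable
four-vectors in dimension seven share a divisor, these facts exclude lengths below `5`, `3`, `3`.
-/

open ExteriorAlgebra (ι ιMulti)

section Contraction

variable {F : Type*} [Field F] {M : Type*} [AddCommGroup M] [Module F M]

theorem ι_mul_swap (v w : M) : ι F v * ι F w = -(ι F w * ι F v) :=
  eq_neg_of_add_eq_zero_left (ExteriorAlgebra.ι_add_mul_swap v w)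

theorem ι_mul_ι_mul_swap (v w : M) (X : ExteriorAlgebra F M) :
    ι F v * (ι F w * X) = -(ι F w * (ι F v * X)) := by
  rw [← mul_assoc, ι_mul_swap, neg_mul, mul_assoc]

theorem ι_mul_ι_mul_self (v : M) (X : ExteriorAlgebra F M) : ι F v * (ι F v * X) = 0 := by
  rw [← mul_assoc, ExteriorAlgebra.ι_sq_zero, zero_mul]

/-- The interior product of a multivector with a linear form, an antiderivation of degree `-1`. -/
noncomputable def contract : Dual F M →ₗ[F] Module.End F (ExteriorAlgebra F M) :=
  CliffordAlgebra.contractLeft (Q := (0 : QuadraticForm F M))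

theorem contract_ι_mul (f : Dual F M) (v : M) (X : ExteriorAlgebra F M) :
    contract f (ι F v * X) = f v • X - ι F v * contract f X :=
  CliffordAlgebra.contractLeft_ι_mul f v X

theorem contract_algebraMap (f : Dual F M) (c : F) :
    contract f (algebraMap F (ExteriorAlgebra F M) c) = 0 :=
  CliffordAlgebra.contractLeft_algebraMap _ f c

theorem contract_eq_zero_of_ι_mul_eq_zero {f : Dual F M} {v : M} {X : ExteriorAlgebra F M}
    (hf : f v = 0) (hX : ι F v * X = 0) : ι F v * contract f X = 0 := by
  simpa [hf, hX] using contract_ι_mul f v X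

theorem memPow.contract_eq_zero {W : Submodule F M} {k : ℕ} {X : ExteriorAlgebra F M}
    (hX : memPow W k X) {f : Dual F M} (hf : W ≤ LinearMap.ker f) : contract f X = 0 := by
  induction hX using Submodule.pow_induction_on_left' with
  | algebraMap c => exact contract_algebraMap f c
  | add X Y i _ _ hX hY => rw [map_add, hX, hY, add_zero]
  | mem_mul m hm _ X _ hX =>
    obtain ⟨w, hw, rfl⟩ := hm
    rw [contract_ι_mul, hX, LinearMap.mem_ker.1 (hf hw), zero_smul, mul_zero, sub_zero]

theorem memPow.mul_ι {W : Submodule F M} {k : ℕ} {X : ExteriorAlgebra F M}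
    (hX : memPow W k X) (v : M) : X * ι F v = (-1 : F) ^ k • (ι F v * X) := by
  induction hX using Submodule.pow_induction_on_left' with
  | algebraMap c => rw [Algebra.commutes, pow_zero, one_smul]
  | add X Y i _ _ hX hY => rw [add_mul, hX, hY, mul_add, smul_add]
  | mem_mul m hm _ X _ hX =>
    obtain ⟨w, -, rfl⟩ := hm
    rw [mul_assoc, hX, mul_smul_comm, ι_mul_ι_mul_swap, pow_succ, smul_neg, mul_neg_one, neg_smul]

end Contraction

section Decomposable

variable {F : Type*} [Field F] {M : Type*} [AddCommGroup M] [Module F M]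
  {A B : Submodule F M} {k : ℕ} {X Y : ExteriorAlgebra F M}

theorem dec_ιMulti {v : Fin k → M} (hv : ∀ i, v i ∈ A) : Dec A k (ιMulti F k v) :=
  ⟨v, hv, ExteriorAlgebra.ιMulti_apply v⟩

theorem Dec.exists_eq_ιMulti (hX : Dec A k X) :
    ∃ v : Fin k → M, (∀ i, v i ∈ A) ∧ X = ιMulti F k v := by
  simpa only [Dec, ExteriorAlgebra.ιMulti_apply] using hX

theorem dec_zero : Dec A (k + 1) 0 :=
  ⟨0, fun _ => A.zero_mem, by simp [List.ofFn_succ]⟩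

theorem dec_ι {v : M} (hv : v ∈ A) : Dec A 1 (ι F v) :=
  ⟨fun _ => v, fun _ => hv, by simp⟩

theorem Dec.ι_mul (hX : Dec A k X) {v : M} (hv : v ∈ A) : Dec A (k + 1) (ι F v * X) := by
  obtain ⟨w, hw, rfl⟩ := hX
  exact ⟨Fin.cons v w, fun i => i.cases (by simpa using hv) (by simpa using hw),
    by simp [List.ofFn_succ]⟩

theorem dec_three {a b c : M} (ha : a ∈ A) (hb : b ∈ A) (hc : c ∈ A) :
    Dec A 3 (ι F a * (ι F b * ι F c)) :=
  ((dec_ι hc).ι_mul hb).ι_mul ha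

theorem dec_four {a b c d : M} (ha : a ∈ A) (hb : b ∈ A) (hc : c ∈ A)
    (hd : d ∈ A) : Dec A 4 (ι F a * (ι F b * (ι F c * ι F d))) :=
  (dec_three hb hc hd).ι_mul ha

theorem Dec.smul (hX : Dec A (k + 1) X) (c : F) : Dec A (k + 1) (c • X) := by
  obtain ⟨v, hv, rfl⟩ := hX.exists_eq_ιMulti
  have h := (ιMulti F (k + 1)).map_update_smul v 0 c (v 0)
  rw [Function.update_eq_self] at h
  rw [← h]
  refine dec_ιMulti fun i => ?_
  rcases eq_or_ne i 0 with rfl | hi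
  · simpa using A.smul_mem c (hv 0)
  · simpa [hi] using hv i

theorem Dec.mono (hX : Dec A k X) (h : A ≤ B) : Dec B k X :=
  let ⟨v, hv, hX⟩ := hX
  ⟨v, fun i => h (hv i), hX⟩

theorem Dec.memPow (hX : Dec A k X) : memPow A k X := by
  obtain ⟨v, hv, rfl⟩ := hX
  induction k with
  | zero => simp [_root_.memPow]
  | succ k ih =>
    rw [List.ofFn_succ, List.prod_cons, _root_.memPow, pow_succ']
    exact Submodule.mul_mem_mul ⟨v 0, hv 0, rfl⟩ (ih (fun i => v i.succ) fun i => hv i.succ)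

theorem ι_mul_ιMulti_eq_zero {v : Fin k → M} {u : M} (hu : u ∈ Submodule.span F (Set.range v)) :
    ι F u * ιMulti F k v = 0 := by
  have h : ¬ LinearIndependent F (Fin.cons u v : Fin (k + 1) → M) := fun h =>
    (linearIndependent_finCons.1 h).2 hu
  simpa [ExteriorAlgebra.ιMulti_succ_apply, Matrix.vecTail, Function.comp_def] using
    AlternatingMap.map_linearDependent (ιMulti F (k + 1)) _ h

/-- The subspace of vectors dividing `X`, that is, of vectors `v` with `v ∧ X = 0`. -/
noncomputable def divisors (X : ExteriorAlgebra F M) : Submodule F M :=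
  LinearMap.ker (LinearMap.mulRight F X ∘ₗ ι F)

theorem mem_divisors {v : M} : v ∈ divisors X ↔ ι F v * X = 0 := Iff.rfl

theorem Dec.le_finrank_divisors [FiniteDimensional F M] (hX : Dec A k X) (hk : k ≤ finrank F M) :
    k ≤ finrank F (divisors X) := by
  obtain ⟨v, -, rfl⟩ := hX.exists_eq_ιMulti
  by_cases hv : LinearIndependent F v
  · calc k = finrank F (Submodule.span F (Set.range v)) := by
          rw [finrank_span_eq_card hv, Fintype.card_fin]
      _ ≤ finrank F (divisors (ιMulti F k v)) :=
          Submodule.finrank_mono fun u hu => ι_mul_ιMulti_eq_zero hu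
  · have htop : divisors (ιMulti F k v) = ⊤ := eq_top_iff.2 fun u _ => by
      rw [mem_divisors, AlternatingMap.map_linearDependent _ _ hv, mul_zero]
    rwa [htop, finrank_top]

theorem Dec.exists_ι_mul_eq_zero (hX : Dec A k X) (hk₀ : 0 < k) (hk : k ≤ finrank F M) :
    ∃ v : M, v ≠ 0 ∧ ι F v * X = 0 := by
  have : FiniteDimensional F M := finite_of_finrank_pos (by omega)
  have hne : divisors X ≠ ⊥ := fun h => by
    have := hX.le_finrank_divisors hk
    rw [h, finrank_bot] at this
    omega
  obtain ⟨v, hv, hv₀⟩ := Submodule.exists_mem_ne_zero_of_ne_bot hne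
  exact ⟨v, hv₀, hv⟩

theorem exists_dual_ne_zero_of_lt_finrank (v : Fin k → M) (hk : k < finrank F M) :
    ∃ f : Dual F M, f ≠ 0 ∧ ∀ i, f (v i) = 0 := by
  have hlt : Submodule.span F (Set.range v) < ⊤ := lt_top_iff_ne_top.2 fun h => by
    have := finrank_range_le_card (R := F) v
    rw [Set.finrank, h, finrank_top, Fintype.card_fin] at this
    omega
  obtain ⟨f, hf, hle⟩ := Submodule.exists_le_ker_of_lt_top _ hlt
  exact ⟨f, hf, fun i => hle (Submodule.subset_span ⟨i, rfl⟩)⟩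

theorem Dec.exists_contract_eq_zero (hX : Dec A k X) (v : M) (hk : k + 1 < finrank F M) :
    ∃ f : Dual F M, f ≠ 0 ∧ f v = 0 ∧ contract f X = 0 := by
  obtain ⟨u, -, rfl⟩ := hX.exists_eq_ιMulti
  obtain ⟨f, hf, h⟩ := exists_dual_ne_zero_of_lt_finrank (Fin.cons v u : Fin (k + 1) → M) hk
  refine ⟨f, hf, by simpa using h 0, ?_⟩
  exact (dec_ιMulti (A := LinearMap.ker f) fun i => by simpa using h i.succ).memPow.contract_eq_zero
    le_rfl

end Decomposable

section Length

variable {F : Type*} [Field F] {M : Type*} [AddCommGroup M] [Module F M]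
  {A B W : Submodule F M} {k l l' : ℕ} {X X₁ X₂ Y : ExteriorAlgebra F M} {v : M}

theorem Dec.lenLE_one (hX : Dec A k X) : LenLE A k 1 X :=
  ⟨fun _ => X, fun _ => hX, by simp⟩

theorem LenLE.dec (hX : LenLE A k 1 X) : Dec A k X := by
  obtain ⟨Y, hY, rfl⟩ := hX
  simpa using hY 0

theorem LenLE.add (hX : LenLE A k l X) (hY : LenLE A k l' Y) : LenLE A k (l + l') (X + Y) := by
  obtain ⟨Z, hZ, rfl⟩ := hX
  obtain ⟨Z', hZ', rfl⟩ := hY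
  refine ⟨Fin.append Z Z', fun i => ?_, by simp [Fin.sum_univ_add]⟩
  induction i using Fin.addCases <;> simp [hZ, hZ']

theorem LenLE.smul (hX : LenLE A (k + 1) l X) (c : F) : LenLE A (k + 1) l (c • X) := by
  obtain ⟨Y, hY, rfl⟩ := hX
  exact ⟨fun i => c • Y i, fun i => (hY i).smul c, Finset.smul_sum⟩

theorem LenLE.exists_eq_add (hX : LenLE A k (l + l') X) :
    ∃ Y Z, LenLE A k l Y ∧ LenLE A k l' Z ∧ X = Y + Z := by
  obtain ⟨Z, hZ, rfl⟩ := hX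
  exact ⟨_, _, ⟨_, fun i => hZ (Fin.castAdd l' i), rfl⟩, ⟨_, fun i => hZ (Fin.natAdd l i), rfl⟩,
    Fin.sum_univ_add Z⟩

theorem LenLE.exists_ι_mul_eq_zero (hX : LenLE A k 2 X) (hk : k ≤ finrank F M)
    (hk' : finrank F M < 2 * k) : ∃ v : M, v ≠ 0 ∧ ι F v * X = 0 := by
  obtain ⟨Y, Z, hY, hZ, rfl⟩ := hX.exists_eq_add (l := 1) (l' := 1)
  have : FiniteDimensional F M := finite_of_finrank_pos (by omega)
  have hne : divisors Y ⊓ divisors Z ≠ ⊥ := fun h => by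
    have hsum := Submodule.finrank_sup_add_finrank_inf_eq (divisors Y) (divisors Z)
    have hsup := Submodule.finrank_le (divisors Y ⊔ divisors Z)
    have hY := hY.dec.le_finrank_divisors hk
    have hZ := hZ.dec.le_finrank_divisors hk
    rw [h, finrank_bot] at hsum
    omega
  obtain ⟨v, ⟨hvY, hvZ⟩, hv⟩ := Submodule.exists_mem_ne_zero_of_ne_bot hne
  exact ⟨v, hv, by rw [mul_add, mem_divisors.1 hvY, mem_divisors.1 hvZ, add_zero]⟩

theorem LenLE.mono (hX : LenLE A (k + 1) l X) (hl : l ≤ l') : LenLE A (k + 1) l' X := by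
  obtain ⟨d, rfl⟩ := Nat.exists_eq_add_of_le hl
  have hzero : LenLE A (k + 1) d 0 := ⟨fun _ => 0, fun _ => dec_zero, by simp⟩
  simpa using hX.add hzero

theorem LenLE.mono_left (hX : LenLE A k l X) (h : A ≤ B) : LenLE B k l X :=
  let ⟨Y, hY, hX⟩ := hX
  ⟨Y, fun i => (hY i).mono h, hX⟩

theorem LenLE.memPow (hX : LenLE A k l X) : memPow A k X := by
  obtain ⟨Y, hY, rfl⟩ := hX
  exact Submodule.sum_mem _ fun i _ => (hY i).memPow

theorem LenLE.hasLen (hX : LenLE A (k + 1) (l + 1) X) (hX' : ¬ LenLE A (k + 1) l X) :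
    HasLen A (k + 1) (l + 1) X :=
  ⟨hX, fun _ hj h => hX' (h.mono (Nat.lt_succ_iff.1 hj))⟩

theorem HasLen.len_eq (hX : HasLen A k l X) : len A k X = l :=
  IsLeast.csInf_eq ⟨hX.1, fun _ hj => not_lt.1 fun hlt => hX.2 _ hlt hj⟩

theorem mInv_eq (hS : Split (k + 2) X v W X₁ X₂) (hX₁ : LenLE A (k + 1) (l + 1) X₁)
    (h : ∀ v W X₁ X₂, Split (k + 2) X v W X₁ X₂ → ¬ LenLE A (k + 1) l X₁) :
    mInv A (k + 2) X = l + 1 := by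
  refine IsLeast.csInf_eq ⟨⟨v, W, X₁, X₂, hS, hX₁.hasLen (h _ _ _ _ hS)⟩, ?_⟩
  rintro j ⟨v, W, Y₁, Y₂, hS, hY₁⟩
  exact not_lt.1 fun hlt => h _ _ _ _ hS (hY₁.1.mono (Nat.lt_succ_iff.1 hlt))

theorem rInv_eq (hS : Split (k + 1) X v W X₁ X₂) (hX₂ : LenLE A (k + 1) (l + 1) X₂)
    (h : ∀ v W X₁ X₂, Split (k + 1) X v W X₁ X₂ → ¬ LenLE A (k + 1) l X₂) :
    rInv A (k + 1) X = l + 1 := by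
  refine IsLeast.csInf_eq ⟨⟨v, W, X₁, X₂, hS, hX₂.hasLen (h _ _ _ _ hS)⟩, ?_⟩
  rintro j ⟨v, W, Y₁, Y₂, hS, hY₂⟩
  exact not_lt.1 fun hlt => h _ _ _ _ hS (hY₂.1.mono (Nat.lt_succ_iff.1 hlt))

theorem supp_eq_top (hX : ∀ f : Dual F M, contract f X = 0 → f = 0) : supp k X = ⊤ := by
  refine sInf_eq_top.2 fun W hW => by_contra fun hne => ?_
  obtain ⟨f, hf, hle⟩ := Submodule.exists_le_ker_of_lt_top W (lt_top_iff_ne_top.2 hne)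
  exact hf (hX f (memPow.contract_eq_zero hW hle))

theorem split_ker {f : Dual F M} (hf : f v = 1) (hX₁ : memPow (LinearMap.ker f) (k - 1) X₁)
    (hX₂ : memPow (LinearMap.ker f) k X₂) (hX : supp k (ι F v * X₁ + X₂) = ⊤) :
    Split k (ι F v * X₁ + X₂) v (LinearMap.ker f) ((-1 : F) ^ (k - 1) • X₁) X₂ := by
  have hv : f v ≠ 0 := hf ▸ one_ne_zero
  refine ⟨hX ▸ trivial, fun h => hv (h ▸ map_zero f), ?_, ?_, Submodule.smul_mem _ _ hX₁, hX₂, ?_⟩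
  · rw [hX, sup_comm, f.span_singleton_sup_ker_eq_top hv]
  · exact (Submodule.disjoint_span_singleton_of_notMem hv).eq_bot
  · rw [smul_mul_assoc, hX₁.mul_ι, smul_smul, ← mul_pow, neg_one_mul, neg_neg, one_pow, one_smul]

theorem Split.exists_dual (hS : Split k X v W X₁ X₂) :
    ∃ f : Dual F M, f v = 1 ∧ W ≤ LinearMap.ker f := by
  obtain ⟨-, hv, -, hW, -⟩ := hS
  have hvW : v ∉ W := fun hvW => hv <| by
    simpa [hW] using Submodule.mem_inf.2 ⟨hvW, Submodule.mem_span_singleton_self v⟩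
  obtain ⟨g, hg, hle⟩ := Submodule.exists_le_ker_of_notMem hvW
  exact ⟨(g v)⁻¹ • g, by simp [hg], fun w hw => by simp [LinearMap.mem_ker.1 (hle hw)]⟩

theorem Split.eq_ι_mul_add (hS : Split k X v W X₁ X₂) :
    X = (-1 : F) ^ (k - 1) • (ι F v * X₁) + X₂ := by
  obtain ⟨-, -, -, -, hX₁, -, hX⟩ := hS
  rw [hX, memPow.mul_ι hX₁]

theorem Split.ι_mul_eq (hS : Split k X v W X₁ X₂) : ι F v * X = ι F v * X₂ := by
  rw [hS.eq_ι_mul_add, mul_add, mul_smul_comm, ι_mul_ι_mul_self, smul_zero, zero_add]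

theorem Split.exists_contract_eq (hS : Split k X v W X₁ X₂) :
    ∃ f : Dual F M, f ≠ 0 ∧ contract f X = (-1 : F) ^ (k - 1) • X₁ := by
  obtain ⟨f, hfv, hle⟩ := hS.exists_dual
  have ⟨_, _, _, _, hX₁, hX₂, _⟩ := hS
  refine ⟨f, fun h => by simp [h] at hfv, ?_⟩
  rw [hS.eq_ι_mul_add, map_add, map_smul, contract_ι_mul, hfv, one_smul,
    hX₁.contract_eq_zero hle, hX₂.contract_eq_zero hle, mul_zero, sub_zero, add_zero]

/-- The quadruple `(ρ, l, m, r)` of invariants of a `k`-vector, the factors of decomposable summands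
being taken from the whole space. -/
noncomputable def invariants (k : ℕ) (X : ExteriorAlgebra F M) : ℕ × ℕ × ℕ × ℕ :=
  (rkInv k X, len ⊤ k X, mInv ⊤ k X, rInv ⊤ k X)

end Length

section LowerBounds

variable {F : Type*} [Field F] {M : Type*} [AddCommGroup M] [Module F M]
  {A W : Submodule F M} {k : ℕ} {X X₁ X₂ : ExteriorAlgebra F M} {v w : M}

/-- No nonzero endomorphism `v ⊗ f` of rank one, acting on multivectors as the derivation
`X ↦ v ∧ (f ⌋ X)`, annihilates `X`. -/
def RankOneFaithful (X : ExteriorAlgebra F M) : Prop :=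
  ∀ (v : M) (f : Dual F M), ι F v * contract f X = 0 → v = 0 ∨ f = 0

/-- `v ∧ w ∧ X ≠ 0` for independent vectors `v` and `w`. When `X` is the Hodge dual of a
`G₂`-form, `v ∧ w ∧ X` is dual to the cross product of `v` and `w`. -/
def WedgeFaithful (X : ExteriorAlgebra F M) : Prop :=
  ∀ v w : M, ι F v * (ι F w * X) = 0 → ¬ LinearIndependent F ![v, w]

/-- `g ⌋ (f ⌋ X) ≠ g ⌋ Y` for independent forms `f`, `g` and decomposable `k`-vectors `Y`, which
keeps the length of `f ⌋ X` above `2` for `f ≠ 0`. -/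
def ContractFaithful (k : ℕ) (X : ExteriorAlgebra F M) : Prop :=
  ∀ (f g : Dual F M) (Y : ExteriorAlgebra F M), Dec ⊤ k Y →
    contract g (contract f X) = contract g Y → ¬ LinearIndependent F ![f, g]

theorem RankOneFaithful.eq_zero_of_contract_eq_zero [Nontrivial M] (hX : RankOneFaithful X)
    {f : Dual F M} (hf : contract f X = 0) : f = 0 := by
  obtain ⟨v, hv⟩ := exists_ne (0 : M)
  exact (hX v f (by rw [hf, mul_zero])).resolve_left hv

theorem RankOneFaithful.not_lenLE_three (hX : RankOneFaithful X) (hk : k + 1 < finrank F M)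
    (hk' : finrank F M < 2 * k) : ¬ LenLE A k 3 X := fun hlen => by
  obtain ⟨Y, Z, hY, hZ, rfl⟩ := hlen.exists_eq_add (l := 2) (l' := 1)
  obtain ⟨v, hv, hvY⟩ := hY.exists_ι_mul_eq_zero (by omega) hk'
  obtain ⟨f, hf, hfv, hfZ⟩ := hZ.dec.exists_contract_eq_zero v hk
  refine (hX v f ?_).elim hv hf
  rw [map_add, hfZ, add_zero, contract_eq_zero_of_ι_mul_eq_zero hfv hvY]

theorem RankOneFaithful.not_lenLE_one_left (hX : RankOneFaithful X)
    (hS : Split (k + 2) X v W X₁ X₂) (hk : k + 1 ≤ finrank F M) : ¬ LenLE A (k + 1) 1 X₁ :=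
  fun hlen => by
  obtain ⟨f, hf, hfX⟩ := hS.exists_contract_eq
  obtain ⟨w, hw, hwX⟩ := hlen.dec.exists_ι_mul_eq_zero k.succ_pos hk
  exact (hX w f (by rw [hfX, mul_smul_comm, hwX, smul_zero])).elim hw hf

theorem RankOneFaithful.not_lenLE_one_right (hX : RankOneFaithful X)
    (hS : Split k X v W X₁ X₂) (hk : k + 1 < finrank F M) : ¬ LenLE A k 1 X₂ := fun hlen => by
  obtain ⟨f, hf, hfv, hfX₂⟩ := hlen.dec.exists_contract_eq_zero v hk
  refine (hX v f ?_).elim hS.2.1 hf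
  have h := contract_ι_mul f v X
  rw [hS.ι_mul_eq, contract_ι_mul, hfv, hfX₂] at h
  simpa using h

theorem WedgeFaithful.exists_smul_eq (hX : WedgeFaithful X) (hv : v ≠ 0)
    (h : ι F v * (ι F w * X) = 0) : ∃ c : F, c • v = w := by
  simpa [LinearIndependent.pair_iff' hv] using hX v w h

theorem WedgeFaithful.ι_mul_ne_zero (hX : WedgeFaithful X) (hM : 1 < finrank F M) (hv : v ≠ 0) :
    ι F v * X ≠ 0 := fun h => by
  obtain ⟨w, hw⟩ := exists_linearIndependent_pair_of_one_lt_finrank hM hv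
  exact hX v w (by rw [ι_mul_ι_mul_swap, h, mul_zero, neg_zero]) hw

theorem WedgeFaithful.not_lenLE_four (hX : WedgeFaithful X) (hM : 1 < finrank F M)
    (hk : k ≤ finrank F M) (hk' : finrank F M < 2 * k) : ¬ LenLE A k 4 X := fun hlen => by
  obtain ⟨Y, Z, hY, hZ, rfl⟩ := hlen.exists_eq_add (l := 2) (l' := 2)
  obtain ⟨v, hv, hvY⟩ := hY.exists_ι_mul_eq_zero hk hk'
  obtain ⟨w, hw, hwZ⟩ := hZ.exists_ι_mul_eq_zero hk hk'
  obtain ⟨c, rfl⟩ := hX.exists_smul_eq hv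
    (show ι F v * (ι F w * (Y + Z)) = 0 by
      rw [mul_add, hwZ, add_zero, ι_mul_ι_mul_swap, hvY, mul_zero, neg_zero])
  refine hX.ι_mul_ne_zero hM hw ?_
  rw [mul_add, hwZ, map_smul, smul_mul_assoc, hvY, smul_zero, add_zero]

theorem WedgeFaithful.not_lenLE_two_right (hX : WedgeFaithful X) (hM : 1 < finrank F M)
    (hS : Split k X v W X₁ X₂) (hk : k ≤ finrank F M) (hk' : finrank F M < 2 * k) :
    ¬ LenLE A k 2 X₂ := fun hlen => by
  obtain ⟨w, hw, hwX₂⟩ := hlen.exists_ι_mul_eq_zero hk hk'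
  obtain ⟨c, rfl⟩ := hX.exists_smul_eq hw
    (show ι F w * (ι F v * X) = 0 by
      rw [hS.ι_mul_eq, ι_mul_ι_mul_swap, hwX₂, mul_zero, neg_zero])
  refine hX.ι_mul_ne_zero hM hS.2.1 ?_
  rw [hS.ι_mul_eq, map_smul, smul_mul_assoc, hwX₂, smul_zero]

theorem ContractFaithful.eq_zero_of_contract_eq_zero (hX : ContractFaithful (k + 1) X)
    (hM : 1 < finrank F M) {f : Dual F M} (hf : contract f X = 0) : f = 0 := by
  by_contra hf₀
  obtain ⟨g, hg⟩ := exists_linearIndependent_pair_of_one_lt_finrank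
    (hM.trans_eq Subspace.dual_finrank_eq.symm) hf₀
  exact hX f g 0 dec_zero (by rw [hf]) hg

theorem ContractFaithful.not_lenLE_two_left (hX : ContractFaithful (k + 1) X)
    (hS : Split (k + 2) X v W X₁ X₂) (hk : k + 2 < finrank F M) : ¬ LenLE A (k + 1) 2 X₁ :=
  fun hlen => by
  obtain ⟨Y, Z, hY, hZ, rfl⟩ := hlen.exists_eq_add (l := 1) (l' := 1)
  obtain ⟨f, hf, hfX⟩ := hS.exists_contract_eq
  obtain ⟨x, hx : f x ≠ 0⟩ := DFunLike.ne_iff.1 hf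
  obtain ⟨g, hg, hgx, hgY⟩ := hY.dec.exists_contract_eq_zero x hk
  refine hX f g ((-1 : F) ^ (k + 2 - 1) • Z) ((hZ.dec.mono le_top).smul _) ?_
    ((LinearIndependent.pair_iff' hf).2 ?_)
  · rw [hfX, map_smul, map_smul, map_add, hgY, zero_add]
  · rintro c rfl
    have hc : c = 0 := by simpa [hx] using hgx
    exact hg (by rw [hc, zero_smul])

end LowerBounds

section Coefficients

variable {F : Type*} [Field F] {M : Type*} [AddCommGroup M] [Module F M] {κ : Type*}

/-- The wedge product `b i ∧ b j ∧ ⋯` over a list `[i, j, …]` of indices. -/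
noncomputable def wedgeList (b : κ → M) (l : List κ) : ExteriorAlgebra F M :=
  (l.map fun i => ι F (b i)).prod

/-- The scalar part of the successive contractions of a multivector with the coordinate forms
`u.coord i`, for `i` in the list `l`. When `l` is strictly increasing this is the coefficient of
`wedgeList u l` in the expansion of the multivector in the basis `u`. -/
noncomputable def coeff (u : Basis κ F M) : List κ → ExteriorAlgebra F M →ₗ[F] F
  | [] => ExteriorAlgebra.algebraMapInv.toLinearMap
  | i :: l => coeff u l ∘ₗ contract (u.coord i)

theorem wedgeList_cons (b : κ → M) (i : κ) (l : List κ) :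
    wedgeList b (i :: l) = ι F (b i) * wedgeList b l := rfl

theorem coeff_cons (u : Basis κ F M) (i : κ) (l : List κ) (X : ExteriorAlgebra F M) :
    coeff u (i :: l) X = coeff u l (contract (u.coord i) X) := rfl

theorem coeff_cons_ι_mul (u : Basis κ F M) (i : κ) (l : List κ) (v : M)
    (X : ExteriorAlgebra F M) :
    coeff u (i :: l) (ι F v * X) =
      u.repr v i * coeff u l X - coeff u l (ι F v * contract (u.coord i) X) := by
  rw [coeff_cons, contract_ι_mul, map_sub, map_smul, smul_eq_mul, u.coord_apply]

theorem coeff_nil_ι_mul (u : Basis κ F M) (v : M) (X : ExteriorAlgebra F M) :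
    coeff u [] (ι F v * X) = 0 := by
  simp [coeff, ExteriorAlgebra.algebraMapInv]

theorem coeff_nil_one (u : Basis κ F M) : coeff u [] 1 = 1 := by
  simp [coeff]

theorem contract_wedgeList_eq_zero (b : κ → M) {l : List κ} {f : Dual F M}
    (hf : ∀ i ∈ l, f (b i) = 0) : contract f (wedgeList b l) = 0 := by
  induction l with
  | nil => simpa [wedgeList] using contract_algebraMap f 1
  | cons i l ih => simp_all [wedgeList_cons, contract_ι_mul]

theorem coeff_ι_mul_eq_zero (u : Basis κ F M) {l : List κ} {j : κ} (hj : j ∉ l)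
    (X : ExteriorAlgebra F M) : coeff u l (ι F (u j) * X) = 0 := by
  induction l generalizing X with
  | nil => exact coeff_nil_ι_mul u _ X
  | cons i l ih =>
    rw [List.mem_cons, not_or] at hj
    rw [coeff_cons_ι_mul, ih hj.2, u.repr_self, Finsupp.single_eq_of_ne (Ne.symm hj.1), zero_mul,
      sub_zero]

theorem coeff_wedgeList [LinearOrder κ] (u : Basis κ F M) {s t : List κ}
    (hs : s.Pairwise (· < ·)) (ht : t.Pairwise (· < ·)) :
    coeff u s (wedgeList u t) = if s = t then 1 else 0 := by
  induction s generalizing t with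
  | nil =>
    cases t with
    | nil => simp [wedgeList, coeff_nil_one]
    | cons j t => simp [wedgeList_cons, coeff_nil_ι_mul]
  | cons i s ih =>
    have hcoord {t : List κ} (h : ∀ j ∈ t, i < j) : contract (u.coord i) (wedgeList u t) = 0 :=
      contract_wedgeList_eq_zero u fun j hj => by simp [(h j hj).ne]
    cases t with
    | nil => simp [coeff_cons, hcoord]
    | cons j t =>
      rw [List.pairwise_cons] at hs ht
      rcases lt_trichotomy i j with hij | rfl | hji
      · have h : ∀ a ∈ j :: t, i < a := by
          simpa using ⟨hij, fun a ha => hij.trans (ht.1 a ha)⟩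
        simp [coeff_cons, hcoord h, hij.ne]
      · simp [coeff_cons, wedgeList_cons, contract_ι_mul, hcoord ht.1, ih hs.2 ht.2]
      · have hj : j ∉ i :: s := by
          simpa using ⟨hji.ne, fun hj => hji.not_gt (hs.1 j hj)⟩
        simp [wedgeList_cons, coeff_ι_mul_eq_zero u hj, hji.ne']

theorem coeff_wedgeList_self [LinearOrder κ] (u : Basis κ F M) {l : List κ}
    (hl : l.Pairwise (· < ·)) : coeff u l (wedgeList u l) = 1 := by
  rw [coeff_wedgeList u hl hl, if_pos rfl]

theorem coeff_wedgeList_of_ne [LinearOrder κ] (u : Basis κ F M) {s t : List κ}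
    (hs : s.Pairwise (· < ·)) (ht : t.Pairwise (· < ·)) (hst : s ≠ t) :
    coeff u s (wedgeList u t) = 0 := by
  rw [coeff_wedgeList u hs ht, if_neg hst]

end Coefficients

section Wedge4

variable {F : Type*} [Field F] {M : Type*} [AddCommGroup M] [Module F M]

theorem wedge4_eq_wedgeList (b : Fin 7 → M) (i j k l : Fin 7) :
    wedge4 (F := F) b i j k l = wedgeList b [i, j, k, l] := by
  simp [wedge4, wedgeList, mul_assoc]

theorem wedge4_swap_left (b : Fin 7 → M) (i j k l : Fin 7) :
    wedge4 (F := F) b j i k l = -wedge4 b i j k l := by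
  rw [wedge4, ι_mul_swap, neg_mul, neg_mul, wedge4]

theorem wedge4_swap_middle (b : Fin 7 → M) (i j k l : Fin 7) :
    wedge4 (F := F) b i k j l = -wedge4 b i j k l := by
  rw [wedge4, mul_assoc (ι F (b i)), ι_mul_swap, mul_neg, neg_mul, ← mul_assoc, wedge4]

theorem wedge4_swap_right (b : Fin 7 → M) (i j k l : Fin 7) :
    wedge4 (F := F) b i j l k = -wedge4 b i j k l := by
  rw [wedge4, mul_assoc, ι_mul_swap (b l), mul_neg, ← mul_assoc, wedge4]

theorem wedge4_swap_pairs (b : Fin 7 → M) (i j k l : Fin 7) :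
    wedge4 (F := F) b k l i j = wedge4 b i j k l := by
  rw [wedge4_swap_middle, wedge4_swap_left, wedge4_swap_right, wedge4_swap_middle]
  simp only [neg_neg]

theorem contract_wedgeList_three {κ : Type*} (f : Dual F M) (b : κ → M) (i j k : κ) :
    contract f (wedgeList b [i, j, k]) =
      f (b i) • wedgeList b [j, k] - f (b j) • wedgeList b [i, k] +
        f (b k) • wedgeList b [i, j] := by
  have h : contract f (wedgeList b ([] : List κ)) = 0 := contract_wedgeList_eq_zero b (by simp)
  simp only [wedgeList_cons, contract_ι_mul, h, mul_sub, mul_smul_comm, mul_zero, sub_zero]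
  abel

theorem contract_wedge4 (f : Dual F M) (b : Fin 7 → M) (i j k l : Fin 7) :
    contract f (wedge4 b i j k l) =
      f (b i) • wedgeList b [j, k, l] - f (b j) • wedgeList b [i, k, l] +
        f (b k) • wedgeList b [i, j, l] - f (b l) • wedgeList b [i, j, k] := by
  rw [wedge4_eq_wedgeList, wedgeList_cons, contract_ι_mul, contract_wedgeList_three]
  simp only [wedgeList_cons, mul_sub, mul_add, mul_smul_comm]
  abel

theorem coeff_four_ι_mul {κ : Type*} (u : Basis κ F M) (i j k l : κ) (v : M)
    (X : ExteriorAlgebra F M) :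
    coeff u [i, j, k, l] (ι F v * X) =
      u.repr v i * coeff u [j, k, l] X - u.repr v j * coeff u [i, k, l] X +
        u.repr v k * coeff u [i, j, l] X - u.repr v l * coeff u [i, j, k] X := by
  simp only [coeff_cons_ι_mul, coeff_nil_ι_mul, ← coeff_cons]
  ring

end Wedge4

section SplitForm

variable {F : Type*} [Field F] {M : Type*} [AddCommGroup M] [Module F M] {c : F}

/-- The normal form of `Ψ₋` in a basis adapted to the symmetries `u₁ ↔ u₂, u₃ ↔ u₄, u₅ ↔ u₆` and
`u₁ → u₃ → u₅ → u₁, u₂ → u₄ → u₆ → u₂`. The nonzero scalar `c` depends only on the scaling of the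
basis. -/
noncomputable def splitForm (c : F) (u : Fin 7 → M) : ExteriorAlgebra F M :=
  wedge4 u 0 1 3 5 + wedge4 u 0 2 4 6 +
    c • (wedge4 u 1 2 3 4 + wedge4 u 1 2 5 6 + wedge4 u 3 4 5 6)

theorem splitForm_comp_swap (c : F) (u : Fin 7 → M) :
    splitForm c (u ∘ (Equiv.swap 1 2 * Equiv.swap 3 4 * Equiv.swap 5 6 : Equiv.Perm (Fin 7))) =
      splitForm c u := by
  change wedge4 u 0 2 4 6 + wedge4 u 0 1 3 5 +
    c • (wedge4 u 2 1 4 3 + wedge4 u 2 1 6 5 + wedge4 u 4 3 6 5) = _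
  simp only [wedge4_swap_left u 1 2, wedge4_swap_left u 3 4, wedge4_swap_right u _ _ 3 4,
    wedge4_swap_right u _ _ 5 6, neg_neg]
  rw [splitForm, add_comm (wedge4 u 0 2 4 6)]

theorem splitForm_comp_rotate (c : F) (u : Fin 7 → M) :
    splitForm c (u ∘ (c[1, 3, 5] * c[2, 4, 6] : Equiv.Perm (Fin 7))) = splitForm c u := by
  change wedge4 u 0 3 5 1 + wedge4 u 0 4 6 2 +
    c • (wedge4 u 3 4 5 6 + wedge4 u 3 4 1 2 + wedge4 u 5 6 1 2) = _
  rw [wedge4_swap_right u 0 3 1 5, wedge4_swap_middle u 0 1 3 5, wedge4_swap_right u 0 4 2 6,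
    wedge4_swap_middle u 0 2 4 6, wedge4_swap_pairs u 1 2 3 4, wedge4_swap_pairs u 1 2 5 6,
    splitForm]
  simp only [neg_neg]
  congr 2
  abel

/-- The permutations of a basis fixing `splitForm`, which move any of the indices `1, …, 6` to any
other. -/
def splitFormStabilizer (F : Type*) [Field F] (M : Type*) [AddCommGroup M] [Module F M] (c : F) :
    Submonoid (Equiv.Perm (Fin 7)) where
  carrier := {π | ∀ u : Fin 7 → M, splitForm c (u ∘ π) = splitForm c u}
  one_mem' _ := rfl
  mul_mem' {π _} hπ hρ u := (hρ (u ∘ π)).trans (hπ u)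

theorem exists_splitForm_eq_repr_one_ne_zero (c : F) (u : Basis (Fin 7) F M) {v : M} {i : Fin 7}
    (hi : i ≠ 0) (hv : u.repr v i ≠ 0) :
    ∃ w : Basis (Fin 7) F M, splitForm c w = splitForm c u ∧ w.repr v 1 ≠ 0 := by
  suffices h : ∃ π ∈ splitFormStabilizer F M c, π 1 = i by
    obtain ⟨π, hπ, rfl⟩ := h
    exact ⟨u.reindex π.symm, by simpa using hπ u, by simpa using hv⟩
  have hσ := splitForm_comp_swap (M := M) c
  have hτ := splitForm_comp_rotate (M := M) c
  fin_cases i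
  · exact absurd rfl hi
  · exact ⟨1, one_mem _, rfl⟩
  · exact ⟨_, hσ, by decide⟩
  · exact ⟨_, hτ, by decide⟩
  · exact ⟨_, mul_mem hσ hτ, by decide⟩
  · exact ⟨_, mul_mem hτ hτ, by decide⟩
  · exact ⟨_, mul_mem (mul_mem hτ hτ) hσ, by decide⟩

variable {u : Basis (Fin 7) F M} {v : M} {f : Dual F M}

theorem eq_of_ι_mul_contract_splitForm_eq_zero (h : ι F v * contract f (splitForm c u) = 0) :
    u.repr v 1 * f (u 2) = 0 ∧
    c * (u.repr v 6 * f (u 2) + u.repr v 1 * f (u 5)) = 0 ∧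
    c * (u.repr v 4 * f (u 2) + u.repr v 1 * f (u 3)) = 0 ∧
    u.repr v 1 * f (u 6) + c * (u.repr v 0 * f (u 3)) = 0 ∧
    c * (u.repr v 0 * f (u 5)) - u.repr v 1 * f (u 4) = 0 ∧
    u.repr v 1 * f (u 0) - c * (u.repr v 6 * f (u 3)) + c * (u.repr v 4 * f (u 5)) = 0 ∧
    c * (u.repr v 1 * f (u 1) + u.repr v 2 * f (u 2) + u.repr v 3 * f (u 3) +
      u.repr v 4 * f (u 4)) = 0 := by
  have hcoeff (i j k l : Fin 7) :
      coeff u [i, j, k, l] (ι F v * contract f (splitForm c u)) = 0 := by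
    rw [h, map_zero]
  simp only [coeff_four_ι_mul, splitForm, map_add, map_smul, map_sub, contract_wedge4] at hcoeff
  have h0146 := hcoeff 0 1 4 6
  have h1346 := hcoeff 1 3 4 6
  have h1456 := hcoeff 1 4 5 6
  have h0124 := hcoeff 0 1 2 4
  have h0126 := hcoeff 0 1 2 6
  have h1246 := hcoeff 1 2 4 6
  have h1234 := hcoeff 1 2 3 4
  clear hcoeff
  simp (disch := decide) only [coeff_wedgeList_self, coeff_wedgeList_of_ne, sub_zero,
    add_zero, zero_add, mul_zero, smul_eq_mul, mul_one] at h0146 h1346 h1456 h0124 h0126 h1246 h1234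
  refine ⟨?_, ?_, ?_, ?_, ?_, ?_, ?_⟩
  · linear_combination h0146
  · linear_combination h1346
  · linear_combination h1456
  · linear_combination h0124
  · linear_combination h0126
  · linear_combination h1246
  · linear_combination h1234

theorem eq_zero_of_ι_mul_contract_splitForm_of_repr_one_ne_zero (hc : c ≠ 0)
    (h : ι F v * contract f (splitForm c u) = 0) (hv : u.repr v 1 ≠ 0) : f = 0 := by
  obtain ⟨h0146, h1346, h1456, h0124, h0126, h1246, h1234⟩ :=
    eq_of_ι_mul_contract_splitForm_eq_zero h
  have h₂ : f (u 2) = 0 := by simpa [hv] using h0146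
  have h₅ : f (u 5) = 0 := by simpa [hv, hc, h₂] using h1346
  have h₃ : f (u 3) = 0 := by simpa [hv, hc, h₂] using h1456
  have h₆ : f (u 6) = 0 := by simpa [hv, h₃] using h0124
  have h₄ : f (u 4) = 0 := by simpa [hv, h₅] using h0126
  have h₀ : f (u 0) = 0 := by simpa [hv, h₃, h₅] using h1246
  have h₁ : f (u 1) = 0 := by simpa [hv, hc, h₂, h₃, h₄] using h1234
  exact u.ext fun i => by fin_cases i <;> assumption

theorem eq_zero_of_ι_zero_mul_contract_splitForm (hc : c ≠ 0)
    (h : ι F (u 0) * contract f (splitForm c u) = 0) : f = 0 := by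
  have hcoeff (j k l : Fin 7) (hj : j ≠ 0) (hk : k ≠ 0) (hl : l ≠ 0) :
      coeff u [j, k, l] (contract f (splitForm c u)) = 0 := by
    simpa [hj, hk, hl, coeff_four_ι_mul] using congrArg (coeff u [0, j, k, l]) h
  simp only [splitForm, map_add, map_smul, map_sub, contract_wedge4] at hcoeff
  have h135 := hcoeff 1 3 5 (by decide) (by decide) (by decide)
  have h234 := hcoeff 2 3 4 (by decide) (by decide) (by decide)
  have h134 := hcoeff 1 3 4 (by decide) (by decide) (by decide)
  have h124 := hcoeff 1 2 4 (by decide) (by decide) (by decide)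
  have h123 := hcoeff 1 2 3 (by decide) (by decide) (by decide)
  have h126 := hcoeff 1 2 6 (by decide) (by decide) (by decide)
  have h125 := hcoeff 1 2 5 (by decide) (by decide) (by decide)
  clear hcoeff
  simp (disch := decide) only [coeff_wedgeList_self, coeff_wedgeList_of_ne, smul_eq_mul, mul_one,
    mul_zero, mul_neg, sub_zero, zero_sub, add_zero, zero_add, neg_eq_zero, mul_eq_zero, hc,
    false_or] at h135 h234 h134 h124 h123 h126 h125
  exact u.ext fun i => by fin_cases i <;> assumption

theorem rankOneFaithful_splitForm (hc : c ≠ 0) (u : Basis (Fin 7) F M) :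
    RankOneFaithful (splitForm c u) := by
  refine fun v f h => or_iff_not_imp_left.2 fun hv => ?_
  by_cases hv₀ : ∃ i ≠ 0, u.repr v i ≠ 0
  · obtain ⟨i, hi, hvi⟩ := hv₀
    obtain ⟨w, hw, hvw⟩ := exists_splitForm_eq_repr_one_ne_zero c u hi hvi
    exact eq_zero_of_ι_mul_contract_splitForm_of_repr_one_ne_zero hc (hw ▸ h) hvw
  · push Not at hv₀
    have hvu : v = u.repr v 0 • u 0 := by
      rw [← u.sum_repr v, Fin.sum_univ_succ]
      simp [hv₀, Fin.succ_ne_zero]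
    have hx : u.repr v 0 ≠ 0 := fun hx => hv (by rw [hvu, hx, zero_smul])
    rw [hvu, map_smul, smul_mul_assoc, smul_eq_zero_iff_right hx] at h
    exact eq_zero_of_ι_zero_mul_contract_splitForm hc h

theorem lenLE_splitForm [NeZero (2 : F)] (c : F) (u : Fin 7 → M) :
    LenLE ⊤ 4 4 (splitForm c u) := by
  have h2 : (2 : F) ≠ 0 := NeZero.ne 2
  have h : splitForm c u =
      ι F (c • u 3) * (ι F (u 4) * (ι F (u 5) * ι F (u 6))) +
        ι F (u 0) * (ι F (u 2 - c ^ 2 • u 1) * (ι F (u 4) * ι F (u 6))) +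
        ι F (-(2⁻¹ : F) • u 1) *
          (ι F (u 2 + u 0) * (ι F (u 3 + c • u 6) * ι F (u 5 - c • u 4))) +
        ι F ((2⁻¹ : F) • u 1) *
          (ι F (u 2 - u 0) * (ι F (u 3 - c • u 6) * ι F (u 5 + c • u 4))) := by
    simp only [splitForm, wedge4, mul_assoc, map_add, map_sub, map_smul, add_mul, mul_add, sub_mul,
      mul_sub, smul_mul_assoc, mul_smul_comm, ι_mul_swap (u 6) (u 4), ι_mul_swap (u 6) (u 5),
      ι_mul_ι_mul_swap (u 1) (u 0), mul_neg]
    match_scalars <;> field_simp <;> ring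
  rw [h]
  refine .add (.add (.add (Dec.lenLE_one ?_) (Dec.lenLE_one ?_)) (Dec.lenLE_one ?_))
    (Dec.lenLE_one ?_) <;>
  exact dec_four trivial trivial trivial trivial

theorem exists_split_splitForm_left (hX : supp 4 (splitForm c u) = ⊤) :
    ∃ v W X₁ X₂, Split 4 (splitForm c u) v W X₁ X₂ ∧ LenLE ⊤ 3 2 X₁ := by
  have h : splitForm c u =
      ι F (u 0) * (ι F (u 1) * (ι F (u 3) * ι F (u 5)) + ι F (u 2) * (ι F (u 4) * ι F (u 6))) +
        (ι F (c • u 1) * (ι F (u 2) * (ι F (u 3) * ι F (u 4))) +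
          ι F (c • u 1) * (ι F (u 2) * (ι F (u 5) * ι F (u 6))) +
          ι F (c • u 3) * (ι F (u 4) * (ι F (u 5) * ι F (u 6)))) := by
    simp only [splitForm, wedge4, mul_assoc, mul_add, map_smul, smul_mul_assoc, smul_add]
  rw [h] at hX ⊢
  have h₁ : LenLE (LinearMap.ker (u.coord 0)) 3 2
      (ι F (u 1) * (ι F (u 3) * ι F (u 5)) + ι F (u 2) * (ι F (u 4) * ι F (u 6))) :=
    .add (Dec.lenLE_one (dec_three (by simp) (by simp) (by simp)))
      (Dec.lenLE_one (dec_three (by simp) (by simp) (by simp)))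
  refine ⟨_, _, _, _, split_ker (f := u.coord 0) (by simp) h₁.memPow ?_ hX,
    (h₁.mono_left le_top).smul _⟩
  refine LenLE.memPow (l := 1 + 1 + 1)
    (.add (.add (Dec.lenLE_one ?_) (Dec.lenLE_one ?_)) (Dec.lenLE_one ?_)) <;>
  exact dec_four (by simp) (by simp) (by simp) (by simp)

theorem exists_split_splitForm_right (hX : supp 4 (splitForm c u) = ⊤) :
    ∃ v W X₁ X₂, Split 4 (splitForm c u) v W X₁ X₂ ∧ LenLE ⊤ 4 2 X₂ := by
  have h : splitForm c u =
      ι F (u 1) * (ι F (-u 0) * (ι F (u 3) * ι F (u 5)) +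
          ι F (c • u 2) * (ι F (u 3) * ι F (u 4)) + ι F (c • u 2) * (ι F (u 5) * ι F (u 6))) +
        (ι F (u 0) * (ι F (u 2) * (ι F (u 4) * ι F (u 6))) +
          ι F (c • u 3) * (ι F (u 4) * (ι F (u 5) * ι F (u 6)))) := by
    simp only [splitForm, wedge4, mul_assoc, mul_add, map_neg, map_smul, smul_mul_assoc, neg_mul,
      mul_neg, ι_mul_ι_mul_swap (u 1) (u 0), mul_smul_comm]
    module
  rw [h] at hX ⊢
  have h₂ : LenLE (LinearMap.ker (u.coord 1)) 4 2
      (ι F (u 0) * (ι F (u 2) * (ι F (u 4) * ι F (u 6))) +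
        ι F (c • u 3) * (ι F (u 4) * (ι F (u 5) * ι F (u 6)))) :=
    .add (Dec.lenLE_one (dec_four (by simp) (by simp) (by simp) (by simp)))
      (Dec.lenLE_one (dec_four (by simp) (by simp) (by simp) (by simp)))
  refine ⟨_, _, _, _, split_ker (f := u.coord 1) (by simp) ?_ h₂.memPow hX, h₂.mono_left le_top⟩
  refine LenLE.memPow (l := 1 + 1 + 1)
    (.add (.add (Dec.lenLE_one ?_) (Dec.lenLE_one ?_)) (Dec.lenLE_one ?_)) <;>
  exact dec_three (by simp) (by simp) (by simp)

theorem invariants_splitForm [NeZero (2 : F)] (hc : c ≠ 0) (u : Basis (Fin 7) F M) :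
    invariants 4 (splitForm c u) = (7, 4, 2, 2) := by
  have hM : finrank F M = 7 := by simp [finrank_eq_card_basis u]
  have : Nontrivial M := nontrivial_of_finrank_pos (R := F) (by omega)
  have hX := rankOneFaithful_splitForm hc u
  have hsupp : supp 4 (splitForm c u) = ⊤ := supp_eq_top fun _ => hX.eq_zero_of_contract_eq_zero
  obtain ⟨_, _, _, _, hS, hX₁⟩ := exists_split_splitForm_left hsupp
  obtain ⟨_, _, _, _, hS', hX₂⟩ := exists_split_splitForm_right hsupp
  simp only [invariants, Prod.mk.injEq]
  refine ⟨?_, ?_, ?_, ?_⟩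
  · rw [rkInv, hsupp, finrank_top, hM]
  · exact ((lenLE_splitForm c u).hasLen (hX.not_lenLE_three (by omega) (by omega))).len_eq
  · exact mInv_eq hS hX₁ fun _ _ _ _ hS => hX.not_lenLE_one_left hS (by omega)
  · exact rInv_eq hS' hX₂ fun _ _ _ _ hS => hX.not_lenLE_one_right hS (by omega)

end SplitForm

section PsiMinus

variable {F : Type*} [Field F] {M : Type*} [AddCommGroup M] [Module F M]

-- For the metric of signature `(3, 4)` attached to `Ψ₋`, the last six vectors are null.
theorem PsiMinus_eq_splitForm [NeZero (2 : F)] (e : Fin 7 → M) :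
    PsiMinus e = splitForm (-4⁻¹ : F)
      ![(2⁻¹ : F) • e 0, e 1 + e 6, e 1 - e 6, e 2 - e 4, e 2 + e 4, e 3 + e 5, e 3 - e 5] := by
  have h2 : (2 : F) ≠ 0 := NeZero.ne 2
  have h4 : (4 : F) = 2 * 2 := by norm_num
  simp only [PsiMinus, splitForm, wedge4, mul_assoc, Matrix.cons_val, map_add, map_sub, map_smul,
    add_mul, mul_add, sub_mul, mul_sub, smul_mul_assoc]
  simp only [ι_mul_ι_mul_self, ExteriorAlgebra.ι_sq_zero, ι_mul_swap (e 4) (e 2),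
    ι_mul_swap (e 4) (e 3), ι_mul_swap (e 5) (e 3), ι_mul_swap (e 6) (e 3), ι_mul_swap (e 6) (e 4),
    ι_mul_swap (e 6) (e 5), ι_mul_ι_mul_swap (e 4) (e 2), ι_mul_ι_mul_swap (e 4) (e 3),
    ι_mul_ι_mul_swap (e 6) (e 1), ι_mul_ι_mul_swap (e 6) (e 2), ι_mul_ι_mul_swap (e 6) (e 3),
    ι_mul_ι_mul_swap (e 6) (e 4), ι_mul_ι_mul_swap (e 6) (e 5), mul_neg, mul_zero, h4]
  match_scalars <;> field_simp <;> ring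

theorem mem_of_add_mem_of_sub_mem [NeZero (2 : F)] {S : Submodule F M} {a b : M}
    (hadd : a + b ∈ S) (hsub : a - b ∈ S) : a ∈ S ∧ b ∈ S := by
  have h2 : (2 : F) ≠ 0 := NeZero.ne 2
  constructor
  · convert S.smul_mem (2⁻¹ : F) (S.add_mem hadd hsub) using 1
    match_scalars <;> field_simp <;> ring
  · convert S.smul_mem (2⁻¹ : F) (S.sub_mem hadd hsub) using 1
    match_scalars <;> field_simp <;> ring

theorem exists_basis_PsiMinus_eq_splitForm [NeZero (2 : F)] (e : Basis (Fin 7) F M) :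
    ∃ u : Basis (Fin 7) F M, PsiMinus e = splitForm (-4⁻¹ : F) u := by
  have h2 : (2 : F) ≠ 0 := NeZero.ne 2
  set u : Fin 7 → M :=
    ![(2⁻¹ : F) • e 0, e 1 + e 6, e 1 - e 6, e 2 - e 4, e 2 + e 4, e 3 + e 5, e 3 - e 5]
  set S := Submodule.span F (Set.range u)
  have hmem (i : Fin 7) : u i ∈ S := Submodule.subset_span ⟨i, rfl⟩
  have he₀ : e 0 ∈ S := (S.smul_mem_iff (inv_ne_zero h2)).1 (hmem 0)
  obtain ⟨he₁, he₆⟩ := mem_of_add_mem_of_sub_mem (hmem 1) (hmem 2)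
  obtain ⟨he₂, he₄⟩ := mem_of_add_mem_of_sub_mem (hmem 4) (hmem 3)
  obtain ⟨he₃, he₅⟩ := mem_of_add_mem_of_sub_mem (hmem 5) (hmem 6)
  have hspan : ⊤ ≤ S := by
    rw [← e.span_eq, Submodule.span_le, Set.range_subset_iff]
    intro i
    fin_cases i <;> assumption
  refine ⟨basisOfTopLeSpanOfCardEqFinrank u hspan (finrank_eq_card_basis e).symm, ?_⟩
  rw [coe_basisOfTopLeSpanOfCardEqFinrank, PsiMinus_eq_splitForm]

theorem invariants_PsiMinus [NeZero (2 : F)] (e : Basis (Fin 7) F M) :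
    invariants 4 (PsiMinus (F := F) e) = (7, 4, 2, 2) := by
  have h4 : (4 : F) ≠ 0 := by
    rw [show (4 : F) = 2 * 2 by norm_num]
    exact mul_self_ne_zero.2 (NeZero.ne 2)
  obtain ⟨u, hu⟩ := exists_basis_PsiMinus_eq_splitForm e
  rw [hu, invariants_splitForm (neg_ne_zero.2 (inv_ne_zero h4))]

theorem invariants_PsiPlus_of_mul_self_eq_neg_one [NeZero (2 : F)] {i : F} (hi : i * i = -1)
    (e : Basis (Fin 7) F M) : invariants 4 (PsiPlus (F := F) e) = (7, 4, 2, 2) := by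
  have hi₀ : i ≠ 0 := fun h => by simp [h] at hi
  have hunit (j : Fin 7) : IsUnit ((![1, 1, 1, 1, i, i, -i] : Fin 7 → F) j) := by
    fin_cases j <;> simp [hi₀]
  rw [← invariants_PsiMinus (e.isUnitSMul hunit)]
  congr 1
  simp [PsiPlus, PsiMinus, wedge4, Basis.isUnitSMul_apply, smul_smul, hi]

end PsiMinus

section Minors

variable {F : Type*} [Field F] {M : Type*} [AddCommGroup M] [Module F M] {κ : Type*}

/-- The `2 × 2` minors of the matrix with rows `x` and `y`: the Plücker coordinates of `x ∧ y`. -/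
def minor (x y : κ → F) (i j : κ) : F := x i * y j - x j * y i

theorem coeff_two_ι_mul_ι (u : Basis κ F M) (i j : κ) (v w : M) :
    coeff u [i, j] (ι F v * ι F w) = minor (u.repr v) (u.repr w) i j := by
  rw [← mul_one (ι F w)]
  simp only [coeff_cons_ι_mul, coeff_nil_ι_mul, coeff_nil_one, contract_ι_mul, map_sub,
    map_smul, smul_eq_mul, u.coord_apply, minor]
  ring

theorem Dec.coeff_contract_plucker {A : Submodule F M} {Y : ExteriorAlgebra F M}
    (hY : Dec A 3 Y) (g : Dual F M) (u : Basis κ F M) (i j k l : κ) :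
    coeff u [i, j] (contract g Y) * coeff u [k, l] (contract g Y) -
      coeff u [i, k] (contract g Y) * coeff u [j, l] (contract g Y) +
      coeff u [i, l] (contract g Y) * coeff u [j, k] (contract g Y) = 0 := by
  obtain ⟨v, -, rfl⟩ := hY
  have h : (List.ofFn fun i => ι F (v i)).prod = wedgeList v [0, 1, 2] := by
    simp [wedgeList, List.ofFn_succ]
  have hcoeff (i j : κ) (m n : Fin 3) : coeff u [i, j] (wedgeList v [m, n]) =
      minor (u.repr (v m)) (u.repr (v n)) i j := by
    simpa [wedgeList] using coeff_two_ι_mul_ι u i j (v m) (v n)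
  simp only [h, contract_wedgeList_three, map_add, map_sub, map_smul, smul_eq_mul, hcoeff, minor]
  ring

theorem contract_contract_wedge4 (f g : Dual F M) (b : Fin 7 → M) (i j k l : Fin 7) :
    contract g (contract f (wedge4 b i j k l)) =
      minor (f ∘ b) (g ∘ b) i j • wedgeList b [k, l] -
        minor (f ∘ b) (g ∘ b) i k • wedgeList b [j, l] +
        minor (f ∘ b) (g ∘ b) i l • wedgeList b [j, k] +
        minor (f ∘ b) (g ∘ b) j k • wedgeList b [i, l] -
        minor (f ∘ b) (g ∘ b) j l • wedgeList b [i, k] +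
        minor (f ∘ b) (g ∘ b) k l • wedgeList b [i, j] := by
  simp only [contract_wedge4, map_add, map_sub, map_smul, contract_wedgeList_three, minor,
    Function.comp_apply]
  module

theorem coeff_six_ι_mul_ι_mul (u : Basis κ F M) (i j k l m n : κ) (v w : M)
    (X : ExteriorAlgebra F M) :
    coeff u [i, j, k, l, m, n] (ι F v * (ι F w * X)) =
      minor (u.repr v) (u.repr w) i j * coeff u [k, l, m, n] X -
      minor (u.repr v) (u.repr w) i k * coeff u [j, l, m, n] X +
      minor (u.repr v) (u.repr w) i l * coeff u [j, k, m, n] X -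
      minor (u.repr v) (u.repr w) i m * coeff u [j, k, l, n] X +
      minor (u.repr v) (u.repr w) i n * coeff u [j, k, l, m] X +
      minor (u.repr v) (u.repr w) j k * coeff u [i, l, m, n] X -
      minor (u.repr v) (u.repr w) j l * coeff u [i, k, m, n] X +
      minor (u.repr v) (u.repr w) j m * coeff u [i, k, l, n] X -
      minor (u.repr v) (u.repr w) j n * coeff u [i, k, l, m] X +
      minor (u.repr v) (u.repr w) k l * coeff u [i, j, m, n] X -
      minor (u.repr v) (u.repr w) k m * coeff u [i, j, l, n] X +
      minor (u.repr v) (u.repr w) k n * coeff u [i, j, l, m] X +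
      minor (u.repr v) (u.repr w) l m * coeff u [i, j, k, n] X -
      minor (u.repr v) (u.repr w) l n * coeff u [i, j, k, m] X +
      minor (u.repr v) (u.repr w) m n * coeff u [i, j, k, l] X := by
  simp only [coeff_cons_ι_mul, coeff_nil_ι_mul, ← coeff_cons, contract_ι_mul, map_sub,
    map_smul, smul_eq_mul, u.coord_apply, minor]
  ring

theorem not_linearIndependent_of_sum_sq_minor_eq_zero [LinearOrder F] [IsStrictOrderedRing F]
    [Fintype κ] (u : Basis κ F M) {v w : M}
    (h : ∑ i, ∑ j, minor (u.repr v) (u.repr w) i j ^ 2 = 0) : ¬ LinearIndependent F ![v, w] := by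
  have hminor (i j : κ) : minor (u.repr v) (u.repr w) i j = 0 := by
    have hrow := (Finset.sum_eq_zero_iff_of_nonneg fun i _ =>
      Finset.sum_nonneg fun j _ => sq_nonneg _).1 h i (Finset.mem_univ i)
    exact pow_eq_zero_iff two_ne_zero |>.1 <|
      (Finset.sum_eq_zero_iff_of_nonneg fun j _ => sq_nonneg _).1 hrow j (Finset.mem_univ j)
  intro hvw
  obtain ⟨i, hi⟩ : ∃ i, u.repr v i ≠ 0 := by
    by_contra! hv
    exact hvw.ne_zero 0 (u.ext_elem fun i => by simpa using hv i)
  refine hi (LinearIndependent.pair_iff.1 hvw (-u.repr w i) (u.repr v i) ?_).2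
  refine u.ext_elem fun j => ?_
  simpa [minor, neg_add_eq_sub, mul_comm] using hminor i j

end Minors

section PsiPlus

variable {F : Type*} [Field F] {M : Type*} [AddCommGroup M] [Module F M]

/-- The seven-dimensional cross product: its entries are, up to order and sign, the coordinates of
the six-vector `x ∧ y ∧ Ψ₊`. -/
def cross (x y : Fin 7 → F) : Fin 7 → F :=
  ![minor x y 1 6 + minor x y 2 4 - minor x y 3 5,
    minor x y 0 6 + minor x y 2 5 + minor x y 3 4,
    minor x y 1 5 + minor x y 3 6 - minor x y 0 4,
    minor x y 2 6 - minor x y 0 5 - minor x y 1 4,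
    minor x y 0 2 - minor x y 1 3 + minor x y 5 6,
    minor x y 0 3 + minor x y 1 2 + minor x y 4 6,
    minor x y 0 1 + minor x y 2 3 + minor x y 4 5]

theorem sum_sq_minor_eq (x y : Fin 7 → F) :
    ∑ i, ∑ j, minor x y i j ^ 2 = 2 * ∑ i, cross x y i ^ 2 := by
  simp only [Fin.sum_univ_seven, cross, minor, Matrix.cons_val]
  ring

theorem cross_eq_zero_of_ι_mul_ι_mul_PsiPlus (e : Basis (Fin 7) F M) {v w : M}
    (h : ι F v * (ι F w * PsiPlus e) = 0) : cross (e.repr v) (e.repr w) = 0 := by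
  have hcoeff (i j k l m n : Fin 7) :
      coeff e [i, j, k, l, m, n] (ι F v * (ι F w * PsiPlus e)) = 0 := by rw [h, map_zero]
  simp only [coeff_six_ι_mul_ι_mul, PsiPlus, wedge4_eq_wedgeList, map_add, map_sub] at hcoeff
  have h₀ := hcoeff 1 2 3 4 5 6
  have h₁ := hcoeff 0 2 3 4 5 6
  have h₂ := hcoeff 0 1 3 4 5 6
  have h₃ := hcoeff 0 1 2 4 5 6
  have h₄ := hcoeff 0 1 2 3 5 6
  have h₅ := hcoeff 0 1 2 3 4 6
  have h₆ := hcoeff 0 1 2 3 4 5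
  clear hcoeff
  simp (disch := decide) only [coeff_wedgeList_self, coeff_wedgeList_of_ne, sub_zero, zero_sub,
    add_zero, zero_add, mul_zero, mul_one, mul_neg] at h₀ h₁ h₂ h₃ h₄ h₅ h₆
  simp only [cross, Matrix.cons_eq_zero_iff]
  refine ⟨?_, ?_, ?_, ?_, ?_, ?_, ?_, Subsingleton.elim _ _⟩
  · linear_combination h₀
  · linear_combination h₁
  · linear_combination h₂
  · linear_combination h₃
  · linear_combination h₄
  · linear_combination h₅
  · linear_combination h₆

theorem sum_sq_cross_eq_zero_of_contract_contract_PsiPlus (e : Basis (Fin 7) F M)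
    {f g : Dual F M} {A : Submodule F M} {Y : ExteriorAlgebra F M} (hY : Dec A 3 Y)
    (h : contract g (contract f (PsiPlus e)) = contract g Y) :
    ∑ i, cross (f ∘ e) (g ∘ e) i ^ 2 = 0 := by
  have hplucker := hY.coeff_contract_plucker g e
  simp only [← h, PsiPlus, contract_contract_wedge4, map_add, map_sub, map_smul,
    smul_eq_mul] at hplucker
  have h₀ := hplucker 0 1 2 3
  have h₁ := hplucker 0 1 4 5
  have h₂ := hplucker 2 3 4 5
  have h₃ := hplucker 1 3 5 6
  have h₄ := hplucker 1 2 4 6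
  have h₅ := hplucker 0 3 4 6
  have h₆ := hplucker 0 2 5 6
  clear hplucker
  simp (disch := decide) only [coeff_wedgeList_self, coeff_wedgeList_of_ne, sub_zero, zero_sub,
    add_zero, zero_add, mul_zero, mul_one] at h₀ h₁ h₂ h₃ h₄ h₅ h₆
  simp only [Fin.sum_univ_seven, cross, minor, Matrix.cons_val] at h₀ h₁ h₂ h₃ h₄ h₅ h₆ ⊢
  linear_combination h₀ + h₁ + h₂ - h₃ + h₄ + h₅ + h₆

theorem wedgeFaithful_PsiPlus [LinearOrder F] [IsStrictOrderedRing F] (e : Basis (Fin 7) F M) :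
    WedgeFaithful (PsiPlus (F := F) e) := fun v w h => by
  refine not_linearIndependent_of_sum_sq_minor_eq_zero e ?_
  simp [sum_sq_minor_eq, cross_eq_zero_of_ι_mul_ι_mul_PsiPlus e h]

theorem contractFaithful_PsiPlus [LinearOrder F] [IsStrictOrderedRing F]
    (e : Basis (Fin 7) F M) : ContractFaithful 3 (PsiPlus (F := F) e) := fun f g Y hY h => by
  have hrepr (f : Dual F M) : ⇑(e.dualBasis.repr f) = f ∘ e := funext (e.dualBasis_repr f)
  refine not_linearIndependent_of_sum_sq_minor_eq_zero e.dualBasis ?_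
  rw [sum_sq_minor_eq, hrepr, hrepr, sum_sq_cross_eq_zero_of_contract_contract_PsiPlus e hY h,
    mul_zero]

theorem lenLE_PsiPlus [NeZero (2 : F)] (e : Fin 7 → M) : LenLE ⊤ 4 5 (PsiPlus (F := F) e) := by
  have h2 : (2 : F) ≠ 0 := NeZero.ne 2
  have h : PsiPlus (F := F) e =
      ι F (e 0) * (ι F (e 1) * (ι F (e 2) * ι F (e 3))) +
        ι F (e 0) * (ι F (e 1) * (ι F (e 4) * ι F (e 5 - e 6))) +
        ι F (e 2) * (ι F (e 3) * (ι F (e 4) * ι F (e 5 + (2 : F) • e 6))) +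
        ι F ((2⁻¹ : F) • (e 0 - e 2 + e 3)) *
          (ι F (e 1 + e 2 + e 3) * (ι F (e 4 + e 5) * ι F (e 6))) +
        ι F ((2⁻¹ : F) • (e 0 - e 2 - e 3)) *
          (ι F (e 1 - e 2 + e 3) * (ι F (e 4 - e 5) * ι F (e 6))) := by
    simp only [PsiPlus, wedge4, mul_assoc, map_add, map_sub, map_smul, add_mul, mul_add, sub_mul,
      mul_sub, smul_mul_assoc, mul_smul_comm, ι_mul_ι_mul_self, ι_mul_ι_mul_swap (e 2) (e 1),
      ι_mul_ι_mul_swap (e 3) (e 1), ι_mul_ι_mul_swap (e 3) (e 2)]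
    match_scalars <;> field_simp <;> ring
  rw [h]
  refine .add (.add (.add (.add (Dec.lenLE_one ?_) (Dec.lenLE_one ?_)) (Dec.lenLE_one ?_))
    (Dec.lenLE_one ?_)) (Dec.lenLE_one ?_) <;>
  exact dec_four trivial trivial trivial trivial

theorem exists_split_PsiPlus {e : Basis (Fin 7) F M} (hX : supp 4 (PsiPlus (F := F) e) = ⊤) :
    ∃ v W X₁ X₂, Split 4 (PsiPlus (F := F) e) v W X₁ X₂ ∧ LenLE ⊤ 3 3 X₁ ∧ LenLE ⊤ 4 3 X₂ := by
  have h : PsiPlus (F := F) e =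
      ι F (e 6) * (ι F (e 0) * (ι F (e 3) * ι F (e 5 - e 4)) +
          ι F (e 1) * (ι F (e 2) * ι F (-e 4 - e 5)) +
          ι F (e 1 - e 0) * (ι F (e 2 + e 3) * ι F (e 5))) +
        (ι F (e 0) * (ι F (e 1) * (ι F (e 2) * ι F (e 3))) +
          ι F (e 0) * (ι F (e 1) * (ι F (e 4) * ι F (e 5))) +
          ι F (e 2) * (ι F (e 3) * (ι F (e 4) * ι F (e 5)))) := by
    simp only [PsiPlus, wedge4, mul_assoc, map_add, map_sub, map_neg, add_mul, mul_add, sub_mul,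
      mul_sub, mul_neg, ι_mul_ι_mul_swap (e 6), ι_mul_swap (e 6)]
    module
  rw [h] at hX ⊢
  have h₁ : LenLE (LinearMap.ker (e.coord 6)) 3 3
      (ι F (e 0) * (ι F (e 3) * ι F (e 5 - e 4)) + ι F (e 1) * (ι F (e 2) * ι F (-e 4 - e 5)) +
        ι F (e 1 - e 0) * (ι F (e 2 + e 3) * ι F (e 5))) := by
    refine .add (.add (Dec.lenLE_one ?_) (Dec.lenLE_one ?_)) (Dec.lenLE_one ?_) <;>
    exact dec_three (by simp) (by simp) (by simp)
  have h₂ : LenLE (LinearMap.ker (e.coord 6)) 4 3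
      (ι F (e 0) * (ι F (e 1) * (ι F (e 2) * ι F (e 3))) +
        ι F (e 0) * (ι F (e 1) * (ι F (e 4) * ι F (e 5))) +
        ι F (e 2) * (ι F (e 3) * (ι F (e 4) * ι F (e 5)))) := by
    refine .add (.add (Dec.lenLE_one ?_) (Dec.lenLE_one ?_)) (Dec.lenLE_one ?_) <;>
    exact dec_four (by simp) (by simp) (by simp) (by simp)
  exact ⟨_, _, _, _, split_ker (f := e.coord 6) (by simp) h₁.memPow h₂.memPow hX,
    (h₁.mono_left le_top).smul _, h₂.mono_left le_top⟩

theorem invariants_PsiPlus [LinearOrder F] [IsStrictOrderedRing F] (e : Basis (Fin 7) F M) :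
    invariants 4 (PsiPlus (F := F) e) = (7, 5, 3, 3) := by
  have hM : finrank F M = 7 := by simp [finrank_eq_card_basis e]
  have hwedge := wedgeFaithful_PsiPlus e
  have hcontract := contractFaithful_PsiPlus e
  have hsupp : supp 4 (PsiPlus (F := F) e) = ⊤ :=
    supp_eq_top fun _ => hcontract.eq_zero_of_contract_eq_zero (by omega)
  obtain ⟨_, _, _, _, hS, hX₁, hX₂⟩ := exists_split_PsiPlus hsupp
  simp only [invariants, Prod.mk.injEq]
  refine ⟨?_, ?_, ?_, ?_⟩
  · rw [rkInv, hsupp, finrank_top, hM]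
  · exact ((lenLE_PsiPlus _).hasLen
      (hwedge.not_lenLE_four (by omega) (by omega) (by omega))).len_eq
  · exact mInv_eq hS hX₁ fun _ _ _ _ hS => hcontract.not_lenLE_two_left hS (by omega)
  · exact rInv_eq hS hX₂ fun _ _ _ _ hS =>
      hwedge.not_lenLE_two_right (by omega) hS (by omega) (by omega)

end PsiPlus

theorem stmt7_general {F K L : Type*} [Field F] [LinearOrder F] [IsStrictOrderedRing F]
    [Field K] [NeZero (2 : K)] [Field L] [NeZero (2 : L)] {i : L} (hi : i * i = -1)
    {M N P : Type*} [AddCommGroup M] [Module F M] [AddCommGroup N] [Module K N]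
    [AddCommGroup P] [Module L P]
    (e : Basis (Fin 7) F M) (e' : Basis (Fin 7) K N) (E : Basis (Fin 7) L P) :
    invariants 4 (PsiPlus (F := F) e) = (7, 5, 3, 3) ∧
      invariants 4 (PsiMinus (F := K) e') = (7, 4, 2, 2) ∧
      invariants 4 (PsiPlus (F := L) E) = (7, 4, 2, 2) :=
  ⟨invariants_PsiPlus e, invariants_PsiMinus e', invariants_PsiPlus_of_mul_self_eq_neg_one hi E⟩

/-- For a seven-dimensional real vector space `V` with a basis
`e¹,…,e⁷` of `V*` one has `(ρ,l,m,r)(Ψ₊) = (7,5,3,3)` and `(ρ,l,m,r)(Ψ₋) = (7,4,2,2)`;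
for a seven-dimensional complex vector space `W` with a basis `E¹,…,E⁷` of `W*` one has
`(ρ,l,m,r)(Ψ_ℂ) = (7,4,2,2)`, where `Ψ_ℂ` is built from the `E^i` like `Ψ₊`. -/
theorem stmt7 {V : Type*} [AddCommGroup V] [Module ℝ V] [FiniteDimensional ℝ V]
    (hV : finrank ℝ V = 7) (e : Basis (Fin 7) ℝ (Module.Dual ℝ V))
    {W : Type*} [AddCommGroup W] [Module ℂ W] [FiniteDimensional ℂ W]
    (hW : finrank ℂ W = 7) (E : Basis (Fin 7) ℂ (Module.Dual ℂ W)) :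
    (rkInv (F := ℝ) 4 (PsiPlus (F := ℝ) (⇑e)) = 7 ∧
      len (⊤ : Submodule ℝ (Module.Dual ℝ V)) 4 (PsiPlus (F := ℝ) (⇑e)) = 5 ∧
      mInv (⊤ : Submodule ℝ (Module.Dual ℝ V)) 4 (PsiPlus (F := ℝ) (⇑e)) = 3 ∧
      rInv (⊤ : Submodule ℝ (Module.Dual ℝ V)) 4 (PsiPlus (F := ℝ) (⇑e)) = 3) ∧
    (rkInv (F := ℝ) 4 (PsiMinus (F := ℝ) (⇑e)) = 7 ∧
      len (⊤ : Submodule ℝ (Module.Dual ℝ V)) 4 (PsiMinus (F := ℝ) (⇑e)) = 4 ∧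
      mInv (⊤ : Submodule ℝ (Module.Dual ℝ V)) 4 (PsiMinus (F := ℝ) (⇑e)) = 2 ∧
      rInv (⊤ : Submodule ℝ (Module.Dual ℝ V)) 4 (PsiMinus (F := ℝ) (⇑e)) = 2) ∧
    (rkInv (F := ℂ) 4 (PsiPlus (F := ℂ) (⇑E)) = 7 ∧
      len (⊤ : Submodule ℂ (Module.Dual ℂ W)) 4 (PsiPlus (F := ℂ) (⇑E)) = 4 ∧
      mInv (⊤ : Submodule ℂ (Module.Dual ℂ W)) 4 (PsiPlus (F := ℂ) (⇑E)) = 2 ∧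
      rInv (⊤ : Submodule ℂ (Module.Dual ℂ W)) 4 (PsiPlus (F := ℂ) (⇑E)) = 2) := by
  simpa only [invariants, Prod.mk.injEq] using stmt7_general Complex.I_mul_I e e E
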